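/- Let S = (N, M₀) be a live H1S system (homogeneous Petri net with at most one shared place). Then S is reversible if and only if S enables a T-sequence, i.e., a firing sequence σ feasible at M₀ containing all transitions with I·P(σ) = 0. -/

import Mathlib

open Classical

structure PetriNet (P T : Type) where
  pre  : P → T → ℕ
  post : T → P → ℕ

namespace PetriNet

variable {P T : Type}

def enabled (N : PetriNet P T) (M : P → ℕ) (t : T) : Prop :=
  ∀ p, N.pre p t ≤ M p

def fire (N : PetriNet P T) (M : P → ℕ) (t : T) : P → ℕ :=
  fun p => M p - N.pre p t + N.post t p

def feasible (N : PetriNet P T) : (P → ℕ) → List T → Prop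
  | _, [] => True
  | M, t :: σ => N.enabled M t ∧ N.feasible (N.fire M t) σ

def fireSeq (N : PetriNet P T) : (P → ℕ) → List T → (P → ℕ)
  | M, [] => M
  | M, t :: σ => N.fireSeq (N.fire M t) σ

/-- `M'` is reachable from `M` by some feasible firing sequence. -/
def reach (N : PetriNet P T) (M M' : P → ℕ) : Prop :=
  ∃ σ : List T, N.feasible M σ ∧ N.fireSeq M σ = M'

/-- Liveness: from every reachable marking, every transition can eventually be enabled. -/
def live (N : PetriNet P T) (M0 : P → ℕ) : Prop :=
  ∀ M, N.reach M0 M → ∀ t, ∃ M', N.reach M M' ∧ N.enabled M' t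

def incidence (N : PetriNet P T) (p : P) (t : T) : ℤ :=
  (N.post t p : ℤ) - (N.pre p t : ℤ)

/-- Potential reachability: the state equation `M = M0 + I·Y` has a solution `Y ∈ ℕ^T`. -/
def potReach [Fintype T] (N : PetriNet P T) (M0 M : P → ℕ) : Prop :=
  ∃ Y : T → ℕ, ∀ p, (M p : ℤ) = (M0 p : ℤ) + ∑ t, N.incidence p t * (Y t : ℤ)

/-- A siphon: a nonempty set of places whose set of input transitions is
included in its set of output transitions. -/
def siphon (N : PetriNet P T) (D : Set P) : Prop :=
  D.Nonempty ∧ ∀ t, (∃ p ∈ D, 0 < N.post t p) → ∃ p ∈ D, 0 < N.pre p t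

/-- `D` is deadlocked at `M`: every place of `D` marks below each of its output weights. -/
def deadlockedAt (N : PetriNet P T) (D : Set P) (M : P → ℕ) : Prop :=
  ∀ p ∈ D, ∀ t, 0 < N.pre p t → M p < N.pre p t

def reversible (N : PetriNet P T) (M0 : P → ℕ) : Prop :=
  ∀ M, N.reach M0 M → N.reach M M0

def deadlockable (N : PetriNet P T) (M0 : P → ℕ) : Prop :=
  ∃ M, N.reach M0 M ∧ ∀ t, ¬ N.enabled M t

def bounded (N : PetriNet P T) (M0 : P → ℕ) : Prop :=
  ∃ k, ∀ M, N.reach M0 M → ∀ p, M p ≤ k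

def structBounded (N : PetriNet P T) : Prop :=
  ∀ M0 : P → ℕ, N.bounded M0

/-- All output weights of each place are equal. -/
def homogeneous (N : PetriNet P T) : Prop :=
  ∀ p t t', 0 < N.pre p t → 0 < N.pre p t' → N.pre p t = N.pre p t'

/-- A place with at least two output transitions. -/
def sharedPlace (N : PetriNet P T) (p : P) : Prop :=
  ∃ t t', t ≠ t' ∧ 0 < N.pre p t ∧ 0 < N.pre p t'

/-- Homogeneous net with at most one shared place. -/
def H1S (N : PetriNet P T) : Prop :=
  N.homogeneous ∧ ∀ p q, N.sharedPlace p → N.sharedPlace q → p = q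

/-- H1S net such that deleting the shared place (if any) yields a WMG≤ :
every non-shared place has at most one input and at most one output transition. -/
def H1S_WMGle (N : PetriNet P T) : Prop :=
  N.H1S ∧ ∀ p, ¬ N.sharedPlace p →
    (∀ t t', 0 < N.post t p → 0 < N.post t' p → t = t') ∧
    (∀ t t', 0 < N.pre p t → 0 < N.pre p t' → t = t')

end PetriNet

/-
By liveness some feasible sequence contains all transitions, and reversibility closes it up to a
T-sequence. Conversely, let `μ` be a marking on a cycle labelled by a T-sequence, and let `m`
satisfy the state equation `m = μ + I·Y` with `Y ≥ 0`. While `μ` runs along the cycle, `m` imitates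
it: a transition `u` with `Y u > 0` is skipped and removed from `Y`; one with `Y u = 0` is fired at
`m` as well. In the second case only a shared place can prevent `m` from enabling `u`. If there is
just one and its output weights agree, liveness refills it by transitions that do not consume from
it. Hence the entries of `Y` at the consumers of the shared place never grow, and enough turns
around the cycle annihilate them. From then on the shared place holds at least as many tokens at `m`
as at `μ`, no refilling is needed, and further turns annihilate all of `Y`, so that `m` meets `μ`.
-/

namespace PetriNet

section FiringSequences

variable {P T : Type} {N : PetriNet P T} {M M₁ M₂ M₃ : P → ℕ} {σ τ : List T} {t : T}

lemma fire_apply (h : N.enabled M t) (p : P) :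
    (N.fire M t p : ℤ) = M p + N.incidence p t := by
  have := h p
  simp only [fire, incidence]
  omega

lemma feasible_append :
    N.feasible M (σ ++ τ) ↔ N.feasible M σ ∧ N.feasible (N.fireSeq M σ) τ := by
  induction σ generalizing M with
  | nil => simp [feasible, fireSeq]
  | cons t σ ih => simp [feasible, fireSeq, ih, and_assoc]

lemma fireSeq_append : N.fireSeq M (σ ++ τ) = N.fireSeq (N.fireSeq M σ) τ := by
  induction σ generalizing M with
  | nil => rfl
  | cons _ _ ih => exact ih

lemma feasible_flatten_replicate_and_fireSeq_eq (hσ : N.feasible M σ) (hM : N.fireSeq M σ = M)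
    (k : ℕ) :
    N.feasible M (List.replicate k σ).flatten ∧ N.fireSeq M (List.replicate k σ).flatten = M := by
  induction k with
  | zero => exact ⟨trivial, rfl⟩
  | succ k ih =>
    simp only [List.replicate_succ, List.flatten_cons, feasible_append, fireSeq_append, hM]
    exact ⟨⟨hσ, ih.1⟩, ih.2⟩

lemma reach.refl (N : PetriNet P T) (M : P → ℕ) : N.reach M M := ⟨[], trivial, rfl⟩

lemma reach.trans (h₁ : N.reach M₁ M₂) (h₂ : N.reach M₂ M₃) : N.reach M₁ M₃ := by
  obtain ⟨σ, hσ, rfl⟩ := h₁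
  obtain ⟨τ, hτ, rfl⟩ := h₂
  exact ⟨σ ++ τ, feasible_append.2 ⟨hσ, hτ⟩, fireSeq_append⟩

lemma reach_fire (h : N.enabled M t) : N.reach M (N.fire M t) := ⟨[t], ⟨h, trivial⟩, rfl⟩

lemma live.of_reach (h : N.live M₁) (hr : N.reach M₁ M₂) : N.live M₂ :=
  fun _ hr' => h _ (hr.trans hr')

lemma live.exists_feasible_subset (h : N.live M) (s : List T) :
    ∃ σ, N.feasible M σ ∧ s ⊆ σ := by
  induction s with
  | nil => exact ⟨[], trivial, List.nil_subset _⟩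
  | cons t s ih =>
    obtain ⟨σ, hσ, hs⟩ := ih
    obtain ⟨_, ⟨τ, hτ, rfl⟩, ht⟩ := h _ ⟨σ, hσ, rfl⟩ t
    refine ⟨σ ++ (τ ++ [t]), feasible_append.2 ⟨hσ, feasible_append.2 ⟨hτ, ht, trivial⟩⟩, ?_⟩
    exact List.cons_subset.2 ⟨by simp, List.subset_append_of_subset_left _ hs⟩

/-- Stop at the first marking at which `p` offers enough tokens: by homogeneity, no output
transition of `p` has been enabled before. -/
lemma homogeneous.exists_feasible_pre_eq_zero (hN : N.homogeneous) {p : P}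
    (ht : 0 < N.pre p t) (hτ : N.feasible M τ) (hp : N.pre p t ≤ N.fireSeq M τ p) :
    ∃ δ, N.feasible M δ ∧ (∀ v ∈ δ, N.pre p v = 0) ∧ N.pre p t ≤ N.fireSeq M δ p := by
  induction τ generalizing M with
  | nil => exact ⟨[], trivial, by simp, hp⟩
  | cons u τ ih =>
    by_cases hM : N.pre p t ≤ M p
    · exact ⟨[], trivial, by simp, hM⟩
    obtain ⟨δ, hδ, hδ₀, hδp⟩ := ih hτ.2 hp
    have hu : N.pre p u = 0 := by
      by_contra hu
      exact hM (hN p t u ht (Nat.pos_of_ne_zero hu) ▸ hτ.1 p)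
    exact ⟨u :: δ, ⟨hτ.1, hδ⟩, List.forall_mem_cons.2 ⟨hu, hδ₀⟩, hδp⟩

end FiringSequences

section StateEquation

variable {P T : Type} [Fintype T] {N : PetriNet P T} {M₁ M₂ M₃ μ m : P → ℕ} {Y Z : T → ℕ}
  {p : P} {u : T}

/-- The state equation `M' = M + I·Y`, whose solvability in `Y` is `potReach`. -/
def StateEq (N : PetriNet P T) (M : P → ℕ) (Y : T → ℕ) (M' : P → ℕ) : Prop :=
  ∀ p, (M' p : ℤ) = M p + ∑ t, N.incidence p t * (Y t : ℤ)

namespace StateEq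

lemma eq_of_zero (h : N.StateEq μ 0 m) : m = μ := by
  funext p
  simpa using h p

lemma trans (h₁ : N.StateEq M₁ Y M₂) (h₂ : N.StateEq M₂ Z M₃) : N.StateEq M₁ (Y + Z) M₃ := by
  intro p
  rw [h₂ p, h₁ p]
  simp only [Pi.add_apply, Nat.cast_add, mul_add, Finset.sum_add_distrib, add_assoc]

lemma sub (h₁ : N.StateEq M₁ Y M₃) (h₂ : N.StateEq M₁ Z M₂) (hZY : Z ≤ Y) :
    N.StateEq M₂ (Y - Z) M₃ := by
  intro p
  have hsum : ∑ t, N.incidence p t * ((Y - Z) t : ℤ) =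
      ∑ t, N.incidence p t * (Y t : ℤ) - ∑ t, N.incidence p t * (Z t : ℤ) := by
    simp only [Pi.sub_apply, Nat.cast_sub (hZY _), mul_sub, Finset.sum_sub_distrib]
  rw [hsum, h₁ p, h₂ p]
  ring

lemma le_of_forall_pre_pos (h : N.StateEq μ Y m) (hp : ∀ t, 0 < N.pre p t → Y t = 0) :
    μ p ≤ m p := by
  have hnonneg : 0 ≤ ∑ t, N.incidence p t * (Y t : ℤ) := by
    refine Finset.sum_nonneg fun t _ => ?_
    rcases (N.pre p t).eq_zero_or_pos with ht | ht
    · simp only [incidence, ht, Nat.cast_zero, sub_zero]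
      positivity
    · simp [hp t ht]
  have := h p
  omega

lemma enabled_of_forall_sharedPlace (h : N.StateEq μ Y m) (hu : N.enabled μ u) (hY : Y u = 0)
    (hs : ∀ p, N.sharedPlace p → N.pre p u ≤ m p) : N.enabled m u := by
  intro p
  by_cases hp : N.sharedPlace p
  · exact hs p hp
  rcases (N.pre p u).eq_zero_or_pos with hpu | hpu
  · omega
  · have honly : ∀ t, 0 < N.pre p t → t = u := fun t ht =>
      by_contra fun htu => hp ⟨t, u, htu, ht, hpu⟩
    exact (hu p).trans (h.le_of_forall_pre_pos fun t ht => honly t ht ▸ hY)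

end StateEq

lemma StateEq.fire_fire (h : N.StateEq μ Y m) (hμ : N.enabled μ u) (hm : N.enabled m u) :
    N.StateEq (N.fire μ u) Y (N.fire m u) := by
  intro p
  rw [fire_apply hμ, fire_apply hm, h p]
  ring

end StateEquation

section Parikh

variable {P T : Type} [DecidableEq T]

/-- The Parikh vector `P(σ)`, counting the occurrences of each transition in `σ`. -/
def parikh (σ : List T) : T → ℕ := fun t => σ.count t

lemma parikh_cons (t : T) (σ : List T) : parikh (t :: σ) = Pi.single t 1 + parikh σ := by
  funext v
  rcases eq_or_ne t v with rfl | htv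
  · simp [parikh, add_comm]
  · simp [parikh, htv, htv.symm]

variable [Fintype T] {N : PetriNet P T} {M μ m : P → ℕ} {σ : List T} {Y : T → ℕ} {u : T}

lemma stateEq_fire (h : N.enabled M u) : N.StateEq M (Pi.single u 1) (N.fire M u) := by
  intro p
  simp [fire_apply h, Pi.single_apply]

lemma stateEq_fireSeq (h : N.feasible M σ) : N.StateEq M (parikh σ) (N.fireSeq M σ) := by
  induction σ generalizing M with
  | nil => intro p; simp [fireSeq, parikh]
  | cons t σ ih => exact parikh_cons t σ ▸ (stateEq_fire h.1).trans (ih h.2)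

lemma fireSeq_eq_self_iff (h : N.feasible M σ) :
    N.fireSeq M σ = M ↔ ∀ p, ∑ t, N.incidence p t * (σ.count t : ℤ) = 0 := by
  rw [funext_iff]
  refine forall_congr' fun p => ?_
  rw [← Int.natCast_inj, stateEq_fireSeq h p, add_eq_left]
  rfl

lemma StateEq.fire_left (h : N.StateEq μ Y m) (hu : N.enabled μ u) (hY : 0 < Y u) :
    N.StateEq (N.fire μ u) (Y - Pi.single u 1) m :=
  h.sub (stateEq_fire hu) (update_le_iff.2 ⟨hY, fun _ _ => Nat.zero_le _⟩)

end Parikh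

lemma reach.potReach {P T : Type} [Fintype T] {N : PetriNet P T} {M M' : P → ℕ}
    (h : N.reach M M') : N.potReach M M' := by
  obtain ⟨σ, hσ, rfl⟩ := h
  exact ⟨parikh σ, stateEq_fireSeq hσ⟩

section TSequences

variable {P T : Type} [Fintype T] [DecidableEq T] {N : PetriNet P T} {M : P → ℕ} {σ : List T}

/-- A T-sequence at `M`: a feasible sequence containing all transitions whose Parikh vector is
annihilated by the incidence matrix. -/
def IsTSequence (N : PetriNet P T) (M : P → ℕ) (σ : List T) : Prop :=
  N.feasible M σ ∧ (∀ t, 1 ≤ σ.count t) ∧ ∀ p, ∑ t, N.incidence p t * (σ.count t : ℤ) = 0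

theorem reversible.exists_isTSequence (hrev : N.reversible M) (hlive : N.live M) :
    ∃ σ, N.IsTSequence M σ := by
  obtain ⟨σ, hσ, hall⟩ := hlive.exists_feasible_subset Finset.univ.toList
  obtain ⟨τ, hτ, hback⟩ := hrev _ ⟨σ, hσ, rfl⟩
  have hστ : N.feasible M (σ ++ τ) := feasible_append.2 ⟨hσ, hτ⟩
  refine ⟨σ ++ τ, hστ, fun t => ?_, (fireSeq_eq_self_iff hστ).1 (fireSeq_append.trans hback)⟩
  exact List.count_pos_iff.2 (List.mem_append_left _ (hall (by simp)))

lemma IsTSequence.exists_cycle_parikh_ge (hσ : N.IsTSequence M σ) (Y : T → ℕ) :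
    ∃ ρ, N.feasible M ρ ∧ N.fireSeq M ρ = M ∧ Y ≤ parikh ρ := by
  obtain ⟨hfeas, hall, hzero⟩ := hσ
  obtain ⟨hρ, hcycle⟩ := feasible_flatten_replicate_and_fireSeq_eq hfeas
    ((fireSeq_eq_self_iff hfeas).2 hzero) (Finset.univ.sup Y)
  refine ⟨_, hρ, hcycle, fun t => ?_⟩
  calc Y t ≤ Finset.univ.sup Y := Finset.le_sup (Finset.mem_univ t)
    _ ≤ Finset.univ.sup Y * σ.count t := Nat.le_mul_of_pos_right _ (hall t)
    _ = parikh (List.replicate (Finset.univ.sup Y) σ).flatten t := by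
      simp [parikh, List.count_flatten]

end TSequences

section Imitation

variable {P T : Type}

/-- A transition is conflicting if it consumes tokens from a shared place, so that another
transition may compete with it. -/
def Conflicting (N : PetriNet P T) (t : T) : Prop :=
  ∃ p, N.sharedPlace p ∧ 0 < N.pre p t

variable [Fintype T] {N : PetriNet P T} {μ m : P → ℕ} {Y : T → ℕ} {u : T}

lemma H1S.exists_feasible_enabled (hN : N.H1S) (hlive : N.live m) (h : N.StateEq μ Y m)
    (hu : N.enabled μ u) (hYu : Y u = 0) :
    ∃ δ, N.feasible m δ ∧ (∀ t ∈ δ, ¬ N.Conflicting t) ∧ N.enabled (N.fireSeq m δ) u := by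
  by_cases hconf : N.Conflicting u
  · obtain ⟨p, hp, hpu⟩ := hconf
    have honly : ∀ q, N.sharedPlace q → q = p := fun q hq => hN.2 q p hq hp
    obtain ⟨_, ⟨τ, hτ, rfl⟩, hτu⟩ := hlive m (reach.refl N m) u
    obtain ⟨δ, hδ, hδ₀, hδp⟩ := hN.1.exists_feasible_pre_eq_zero hpu hτ (hτu p)
    have huδ : u ∉ δ := fun hmem => hpu.ne' (hδ₀ u hmem)
    refine ⟨δ, hδ, ?_, ?_⟩
    · rintro t ht ⟨q, hq, hqt⟩
      obtain rfl := honly q hq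
      exact hqt.ne' (hδ₀ t ht)
    · refine (h.trans (stateEq_fireSeq hδ)).enabled_of_forall_sharedPlace hu ?_ fun q hq => ?_
      · simp [hYu, parikh, List.count_eq_zero.2 huδ]
      · exact honly q hq ▸ hδp
  · refine ⟨[], trivial, by simp, h.enabled_of_forall_sharedPlace hu hYu fun p hp => ?_⟩
    have hpu : N.pre p u = 0 := Nat.eq_zero_of_not_pos fun hpu => hconf ⟨p, hp, hpu⟩
    omega

variable [DecidableEq T] {σ ρ : List T}

lemma StateEq.exists_reach_fire (h : N.StateEq μ Y m) (hY : ∀ t, N.Conflicting t → Y t = 0)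
    (hu : N.enabled μ u) :
    ∃ m', N.reach m m' ∧ N.StateEq (N.fire μ u) (Y - Pi.single u 1) m' := by
  rcases (Y u).eq_zero_or_pos with hYu | hYu
  · have hm : N.enabled m u := h.enabled_of_forall_sharedPlace hu hYu fun p hp =>
      (hu p).trans (h.le_of_forall_pre_pos fun t ht => hY t ⟨p, hp, ht⟩)
    have hsub : Y - Pi.single u 1 = Y := by
      funext t
      rcases eq_or_ne t u with rfl | htu <;> simp [*]
    exact ⟨_, reach_fire hm, hsub.symm ▸ h.fire_fire hu hm⟩
  · exact ⟨m, reach.refl N m, h.fire_left hu hYu⟩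

lemma StateEq.exists_reach_fireSeq (h : N.StateEq μ Y m) (hY : ∀ t, N.Conflicting t → Y t = 0)
    (hρ : N.feasible μ ρ) :
    ∃ m', N.reach m m' ∧ N.StateEq (N.fireSeq μ ρ) (Y - parikh ρ) m' := by
  induction ρ generalizing μ m Y with
  | nil => exact ⟨m, reach.refl N m, h⟩
  | cons u ρ ih =>
    obtain ⟨m₁, hr₁, hs₁⟩ := h.exists_reach_fire hY hρ.1
    obtain ⟨m₂, hr₂, hs₂⟩ := ih hs₁ (fun t ht => by simp [hY t ht]) hρ.2
    exact ⟨m₂, hr₁.trans hr₂, by rwa [parikh_cons, ← tsub_tsub]⟩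

lemma H1S.exists_reach_fire (hN : N.H1S) (hlive : N.live m) (h : N.StateEq μ Y m)
    (hu : N.enabled μ u) :
    ∃ m' Y', N.reach m m' ∧ N.StateEq (N.fire μ u) Y' m' ∧
      ∀ t, N.Conflicting t → Y' t = Y t - (Pi.single u 1 : T → ℕ) t := by
  rcases (Y u).eq_zero_or_pos with hYu | hYu
  · obtain ⟨δ, hδ, hδc, hδu⟩ := hN.exists_feasible_enabled hlive h hu hYu
    refine ⟨_, Y + parikh δ, reach.trans ⟨δ, hδ, rfl⟩ (reach_fire hδu),
      (h.trans (stateEq_fireSeq hδ)).fire_fire hu hδu, fun t ht => ?_⟩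
    have htδ : parikh δ t = 0 := List.count_eq_zero.2 fun hmem => hδc t hmem ht
    rcases eq_or_ne t u with rfl | htu <;> simp [*]
  · exact ⟨m, _, reach.refl N m, h.fire_left hu hYu, fun _ _ => rfl⟩

lemma H1S.exists_reach_fireSeq (hN : N.H1S) (hlive : N.live m) (h : N.StateEq μ Y m)
    (hρ : N.feasible μ ρ) :
    ∃ m' Y', N.reach m m' ∧ N.StateEq (N.fireSeq μ ρ) Y' m' ∧
      ∀ t, N.Conflicting t → Y' t = Y t - parikh ρ t := by
  induction ρ generalizing μ m Y with
  | nil => exact ⟨m, Y, reach.refl N m, h, fun _ _ => rfl⟩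
  | cons u ρ ih =>
    obtain ⟨m₁, Y₁, hr₁, hs₁, hY₁⟩ := hN.exists_reach_fire hlive h hρ.1
    obtain ⟨m₂, Y₂, hr₂, hs₂, hY₂⟩ := ih (hlive.of_reach hr₁) hs₁ hρ.2
    refine ⟨m₂, Y₂, hr₁.trans hr₂, hs₂, fun t ht => ?_⟩
    rw [hY₂ t ht, hY₁ t ht, parikh_cons, Pi.add_apply, Nat.sub_sub]

theorem H1S.reach_of_potReach (hN : N.H1S) (hlive : N.live m) (hσ : N.IsTSequence μ σ)
    (h : N.potReach μ m) : N.reach m μ := by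
  obtain ⟨Y, hY : N.StateEq μ Y m⟩ := h
  obtain ⟨ρ, hρ, hcycle, hYρ⟩ := hσ.exists_cycle_parikh_ge Y
  obtain ⟨m₁, Y₁, hr₁, hs₁, hY₁⟩ := hN.exists_reach_fireSeq hlive hY hρ
  have hconf : ∀ t, N.Conflicting t → Y₁ t = 0 := fun t ht =>
    (hY₁ t ht).trans (Nat.sub_eq_zero_of_le (hYρ t))
  obtain ⟨ρ₁, hρ₁, hcycle₁, hYρ₁⟩ := hσ.exists_cycle_parikh_ge Y₁
  rw [hcycle] at hs₁
  obtain ⟨m₂, hr₂, hs₂⟩ := hs₁.exists_reach_fireSeq hconf hρ₁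
  rw [hcycle₁, tsub_eq_zero_of_le hYρ₁] at hs₂
  exact hs₂.eq_of_zero ▸ hr₁.trans hr₂

end Imitation

end PetriNet

/-- a live H1S system is reversible iff it enables a T-sequence:
a feasible sequence containing all transitions whose Parikh vector is annihilated
by the incidence matrix. -/
theorem stmt13 {P T : Type} [Fintype T] [DecidableEq T] (N : PetriNet P T)
    (M0 : P → ℕ) (hclass : N.H1S) (hlive : N.live M0) :
    N.reversible M0 ↔
      ∃ σ : List T, N.feasible M0 σ ∧ (∀ t, 1 ≤ σ.count t) ∧
        ∀ p, ∑ t, N.incidence p t * (σ.count t : ℤ) = 0 := by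
  constructor
  · exact fun hrev => hrev.exists_isTSequence hlive
  · rintro ⟨σ, hσ⟩ M hM
    exact hclass.reach_of_potReach (hlive.of_reach hM) hσ hM.potReach
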